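/- Let f : V → [0,∞], let A : V → W be a bounded linear operator between separable real Hilbert spaces with ⟨A*Ax,x⟩ ≤ γ‖x‖² for all x ∈ V (for some γ > 0), let d ∈ W, and define 𝒥(x) = f(x) + ½‖Ax−d‖²_W and 𝒥_γ(x) = S_γ²(f)(x) + ½‖Ax−d‖²_W. Then CE(𝒥) ≤ 𝒥_γ ≤ 𝒥 pointwise, where CE(𝒥) is the lower semicontinuous convex envelope of 𝒥. -/

import Mathlib

/-!
`S_γ²(f)` is the supremum of the paraboloids of curvature `-γ` lying below `f`, which makes
`S_γ²(f) ≤ f` clear. For the other inequality, write a lower semicontinuous convex minorant of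
`𝒥 = f + q`, where `q = ½‖A · - d‖²`, as a supremum of affine functions `φ + b`. Then
`φ + b - q ≤ f`. Since `A*A ≤ γI`, a paraboloid of curvature `γ` touches `q` from above at any given
point, so one of curvature `-γ` touches `φ + b - q` from below there. The latter lies below `f`,
hence below `S_γ²(f)`.
-/

open scoped InnerProductSpace RealInnerProductSpace ENNReal Topology
open Filter

noncomputable section

/-- The S-transform `S_γ(f)(y) = sup_x ( -f(x) - (γ/2)‖x-y‖² )` for
extended-real-valued functions on a real inner product space. -/
def SgammaE {V : Type*} [NormedAddCommGroup V] [InnerProductSpace ℝ V]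
    (γ : ℝ) (f : V → EReal) (y : V) : EReal :=
  ⨆ x : V, (-(f x) - (((γ / 2) * ‖x - y‖ ^ 2 : ℝ) : EReal))

/-- The S-transform of a `[0,∞]`-valued function. -/
def Sgamma {V : Type*} [NormedAddCommGroup V] [InnerProductSpace ℝ V]
    (γ : ℝ) (f : V → ℝ≥0∞) (y : V) : EReal :=
  SgammaE γ (fun x => (f x : EReal)) y

/-- The twice iterated S-transform `S_γ²(f) = S_γ(S_γ(f))`. -/
def Sgamma2 {V : Type*} [NormedAddCommGroup V] [InnerProductSpace ℝ V]
    (γ : ℝ) (f : V → ℝ≥0∞) : V → EReal :=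
  SgammaE γ (Sgamma γ f)

/-- Convexity for extended-real-valued functions. -/
def EConvexOn {V : Type*} [NormedAddCommGroup V] [InnerProductSpace ℝ V]
    (h : V → EReal) : Prop :=
  ∀ x y : V, ∀ a b : ℝ, 0 ≤ a → 0 ≤ b → a + b = 1 →
    h (a • x + b • y) ≤ (a : EReal) * h x + (b : EReal) * h y

/-- The lower semicontinuous convex envelope of `g`: the (pointwise) supremum of all l.s.c.
convex functions below `g`, which is the largest such function. -/
def lscConvexEnvelope {V : Type*} [NormedAddCommGroup V] [InnerProductSpace ℝ V]
    (g : V → EReal) (x : V) : EReal :=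
  ⨆ h : {h : V → EReal // LowerSemicontinuous h ∧ EConvexOn h ∧ ∀ x, h x ≤ g x}, h.1 x

theorem nonneg_of_forall_ge_lt_add_mul {a β t₀ u : ℝ} (hu : ∀ t ≥ t₀, u < a + β * t) : 0 ≤ β := by
  by_contra! hβ
  have hle : β * max t₀ ((u - a) / β) ≤ β * ((u - a) / β) :=
    mul_le_mul_of_nonpos_left (le_max_right _ _) hβ.le
  rw [mul_div_cancel₀ _ hβ.ne] at hle
  linarith [hu _ (le_max_left t₀ ((u - a) / β))]

section AffineMinorants

variable {V : Type*} [NormedAddCommGroup V] [InnerProductSpace ℝ V] {h : V → EReal}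

theorem EConvexOn.convex_epigraph (hconv : EConvexOn h) :
    Convex ℝ {p : V × ℝ | h p.1 ≤ (p.2 : EReal)} := by
  rintro ⟨z, s⟩ hz ⟨w, t⟩ hw a b ha hb hab
  calc h (a • z + b • w) ≤ (a : EReal) * h z + (b : EReal) * h w := hconv z w a b ha hb hab
    _ ≤ (a : EReal) * s + (b : EReal) * t :=
      add_le_add (mul_le_mul_of_nonneg_left hz (EReal.coe_nonneg.2 ha))
        (mul_le_mul_of_nonneg_left hw (EReal.coe_nonneg.2 hb))
    _ = ((a • s + b • t : ℝ) : EReal) := by simp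

theorem EConvexOn.eq_bot_of_eq_bot (hconv : EConvexOn h) (hlsc : LowerSemicontinuous h) {z : V}
    (hz : h z = ⊥) (x : V) : h x = ⊥ := by
  have hsegment (a : ℝ) (ha : a ∈ Set.Ioo (0 : ℝ) 1) : h (AffineMap.lineMap x z a) = ⊥ := by
    have hle := hconv z x a (1 - a) ha.1.le (sub_nonneg.2 ha.2.le) (add_sub_cancel a 1)
    -- `⊥ + ⊤ = ⊥` in `EReal`, so `h x` may be `⊤` here.
    rw [hz, EReal.coe_mul_bot_of_pos ha.1, EReal.bot_add, le_bot_iff] at hle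
    rwa [AffineMap.lineMap_apply_module, add_comm]
  have htendsto : Tendsto (AffineMap.lineMap x z : ℝ → V) (𝓝[>] 0) (𝓝 x) :=
    (AffineMap.lineMap_continuous.tendsto' 0 x (AffineMap.lineMap_apply_zero x z)).mono_left
      nhdsWithin_le_nhds
  exact le_bot_iff.1 <| (hlsc.isClosed_preimage ⊥).mem_of_tendsto htendsto <|
    mem_of_superset (Ioo_mem_nhdsGT one_pos) fun a ha => (hsegment a ha).le

theorem EConvexOn.exists_separating_hyperplane (hconv : EConvexOn h)
    (hlsc : LowerSemicontinuous h) {x : V} {c : ℝ} (hc : (c : EReal) < h x) :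
    ∃ (φ : V →L[ℝ] ℝ) (β u : ℝ), φ x + β * c < u ∧
      ∀ (z : V) (t : ℝ), h z ≤ t → u < φ z + β * t := by
  have hclosed : IsClosed {p : V × ℝ | h p.1 ≤ (p.2 : EReal)} :=
    hlsc.isClosed_epigraph.preimage
      (continuous_fst.prodMk (continuous_coe_real_ereal.comp continuous_snd))
  obtain ⟨ψ, u, hxu, hu⟩ := geometric_hahn_banach_point_closed hconv.convex_epigraph hclosed
    (x := (x, c)) hc.not_ge
  have hψ (z : V) (t : ℝ) :
      ψ (z, t) = ψ.comp (ContinuousLinearMap.inl ℝ V ℝ) z + ψ (0, 1) * t := by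
    rw [← mul_comm t, ← smul_eq_mul t, ← map_smul, ContinuousLinearMap.comp_apply,
      ContinuousLinearMap.inl_apply, ← map_add]
    simp
  exact ⟨_, ψ (0, 1), u, hψ x c ▸ hxu, fun z t hzt => hψ z t ▸ hu (z, t) hzt⟩

theorem EConvexOn.exists_affine_le (hconv : EConvexOn h) (hlsc : LowerSemicontinuous h) {z₀ : V}
    (htop : h z₀ ≠ ⊤) (hbot : h z₀ ≠ ⊥) :
    ∃ (φ : V →L[ℝ] ℝ) (b : ℝ), ∀ z, ((φ z + b : ℝ) : EReal) ≤ h z := by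
  lift h z₀ to ℝ using ⟨htop, hbot⟩ with t₀ ht₀
  obtain ⟨φ, β, u, hbelow, habove⟩ := hconv.exists_separating_hyperplane hlsc (x := z₀)
    (c := t₀ - 1) (by rw [← ht₀]; exact_mod_cast sub_one_lt t₀)
  have hβ : 0 < β := by linarith [habove z₀ t₀ ht₀.ge]
  refine ⟨-(β⁻¹ • φ), β⁻¹ * u, fun z => EReal.le_of_forall_lt_iff_le.1 fun t ht => ?_⟩
  have hle : β⁻¹ * (u - φ z) ≤ t := by
    rw [inv_mul_le_iff₀ hβ]
    linarith [habove z t ht.le]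
  simp only [neg_apply, smul_apply, smul_eq_mul]
  exact_mod_cast (by linarith : -(β⁻¹ * φ z) + β⁻¹ * u ≤ t)

theorem EConvexOn.exists_affine_le_of_lt (hconv : EConvexOn h) (hlsc : LowerSemicontinuous h)
    {x : V} {c : ℝ} (hc : (c : EReal) < h x) :
    ∃ (φ : V →L[ℝ] ℝ) (b : ℝ), (∀ z, ((φ z + b : ℝ) : EReal) ≤ h z) ∧ c ≤ φ x + b := by
  by_cases hdom : ∀ z, h z = ⊤
  · exact ⟨0, c, fun z => by simp [hdom z], by simp⟩
  push Not at hdom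
  obtain ⟨z₀, hz₀⟩ := hdom
  have hz₀bot : h z₀ ≠ ⊥ := fun hbot => hc.ne_bot (hconv.eq_bot_of_eq_bot hlsc hbot x)
  obtain ⟨φ₀, b₀, hle₀⟩ := hconv.exists_affine_le hlsc hz₀ hz₀bot
  obtain ⟨φ, β, u, hbelow, habove⟩ := hconv.exists_separating_hyperplane hlsc hc
  have hβ : 0 ≤ β := nonneg_of_forall_ge_lt_add_mul fun t ht =>
    habove z₀ t ((EReal.le_coe_toReal hz₀).trans (EReal.coe_le_coe_iff.2 ht))
  -- The hyperplane may be vertical (`β = 0`), so its equation is added, with a large weight `N`,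
  -- to the affine minorant `φ₀ + b₀`.
  have hgap : 0 < u - (φ x + β * c) := sub_pos.2 hbelow
  obtain ⟨N, hN, hNc⟩ : ∃ N : ℝ, 0 ≤ N ∧ c - (φ₀ x + b₀) ≤ N * (u - (φ x + β * c)) :=
    ⟨|c - (φ₀ x + b₀)| / (u - (φ x + β * c)), by positivity, by
      rw [div_mul_cancel₀ _ hgap.ne']
      exact le_abs_self _⟩
  have hpos : 0 < 1 + N * β := by positivity
  have hval (z : V) : ((1 + N * β)⁻¹ • (φ₀ - N • φ)) z + (1 + N * β)⁻¹ * (b₀ + N * u) =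
      (1 + N * β)⁻¹ * (φ₀ z + b₀ + N * (u - φ z)) := by
    simp only [smul_apply, sub_apply, smul_eq_mul]
    ring
  refine ⟨(1 + N * β)⁻¹ • (φ₀ - N • φ), (1 + N * β)⁻¹ * (b₀ + N * u), fun z => ?_, ?_⟩
  · refine EReal.le_of_forall_lt_iff_le.1 fun t ht => ?_
    have hle₀t : φ₀ z + b₀ ≤ t := EReal.coe_le_coe_iff.1 ((hle₀ z).trans ht.le)
    have hNt : N * (u - φ z) ≤ N * (β * t) :=
      mul_le_mul_of_nonneg_left (by linarith [habove z t ht.le]) hN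
    rw [hval, EReal.coe_le_coe_iff, inv_mul_le_iff₀ hpos]
    linarith
  · rw [hval, le_inv_mul_iff₀ hpos]
    linarith

end AffineMinorants

section STransform

variable {V : Type*} [NormedAddCommGroup V] [InnerProductSpace ℝ V] {γ : ℝ}

theorem SgammaE_SgammaE_le (γ : ℝ) (f : V → EReal) (x : V) :
    SgammaE γ (SgammaE γ f) x ≤ f x := by
  refine iSup_le fun y => EReal.sub_le_of_le_add ?_
  have hle : -f x - ((γ / 2 * ‖x - y‖ ^ 2 : ℝ) : EReal) ≤ SgammaE γ f y :=
    le_iSup (fun z => -f z - ((γ / 2 * ‖z - y‖ ^ 2 : ℝ) : EReal)) x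
  rw [norm_sub_rev, ← EReal.neg_le_neg_iff] at hle
  rwa [EReal.neg_sub (Or.inr (EReal.coe_ne_bot _)) (Or.inr (EReal.coe_ne_top _)), neg_neg] at hle

theorem SgammaE_le_neg_of_paraboloid_le {f : V → EReal} {c : ℝ} {y : V}
    (hf : ∀ z, ((c - γ / 2 * ‖z - y‖ ^ 2 : ℝ) : EReal) ≤ f z) :
    SgammaE γ f y ≤ -(c : EReal) := by
  refine iSup_le fun z => EReal.sub_le_of_le_add ?_
  calc -f z ≤ -((c - γ / 2 * ‖z - y‖ ^ 2 : ℝ) : EReal) := EReal.neg_le_neg_iff.2 (hf z)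
    _ = -(c : EReal) + ((γ / 2 * ‖z - y‖ ^ 2 : ℝ) : EReal) := by
      rw [← EReal.coe_neg, ← EReal.coe_neg, ← EReal.coe_add, neg_sub', sub_neg_eq_add]

theorem paraboloid_le_SgammaE_SgammaE {f : V → EReal} {c : ℝ} {y : V}
    (hf : ∀ z, ((c - γ / 2 * ‖z - y‖ ^ 2 : ℝ) : EReal) ≤ f z) (x : V) :
    ((c - γ / 2 * ‖x - y‖ ^ 2 : ℝ) : EReal) ≤ SgammaE γ (SgammaE γ f) x := by
  refine le_trans ?_ (le_iSup (fun w => -SgammaE γ f w - ((γ / 2 * ‖w - x‖ ^ 2 : ℝ) : EReal)) y)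
  rw [norm_sub_rev, EReal.coe_sub]
  exact EReal.sub_le_sub (EReal.le_neg_of_le_neg (SgammaE_le_neg_of_paraboloid_le hf)) le_rfl

theorem exists_paraboloid_eq [CompleteSpace V] (hγ : γ ≠ 0) (ℓ : V →L[ℝ] ℝ) (a : ℝ) (x : V) :
    ∃ (c : ℝ) (y : V), ∀ z,
      c - γ / 2 * ‖z - y‖ ^ 2 = a + ℓ (z - x) - γ / 2 * ‖z - x‖ ^ 2 := by
  set g : V := (InnerProductSpace.toDual ℝ V).symm ℓ
  refine ⟨a + γ⁻¹ / 2 * ‖g‖ ^ 2, x + γ⁻¹ • g, fun z => ?_⟩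
  have hℓ : ⟪z - x, g⟫_ℝ = ℓ (z - x) := by
    rw [real_inner_comm, InnerProductSpace.toDual_symm_apply]
  rw [← sub_sub, norm_sub_sq_real, norm_smul, inner_smul_right, hℓ, mul_pow, Real.norm_eq_abs,
    sq_abs]
  field_simp
  ring

theorem le_SgammaE_SgammaE_of_forall_le [CompleteSpace V] (hγ : γ ≠ 0) {f : V → EReal}
    {ℓ : V →L[ℝ] ℝ} {a : ℝ} {x : V}
    (hf : ∀ z, ((a + ℓ (z - x) - γ / 2 * ‖z - x‖ ^ 2 : ℝ) : EReal) ≤ f z) :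
    (a : EReal) ≤ SgammaE γ (SgammaE γ f) x := by
  obtain ⟨c, y, heq⟩ := exists_paraboloid_eq hγ ℓ a x
  have hle := paraboloid_le_SgammaE_SgammaE (fun z => heq z ▸ hf z) x
  rw [heq] at hle
  simpa using hle

end STransform

section Semiconcave

variable {V : Type*} [NormedAddCommGroup V] [InnerProductSpace ℝ V] {γ : ℝ}

/-- Semiconcavity with constant `γ`: at every point `q` is touched from above by a paraboloid of
curvature `γ`. The slope `ℓ` is required to be continuous, so that no continuity of `q` has to be
assumed. -/
def IsSemiconcave (γ : ℝ) (q : V → ℝ) : Prop :=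
  ∀ x, ∃ ℓ : V →L[ℝ] ℝ, ∀ z, q z ≤ q x + ℓ (z - x) + γ / 2 * ‖z - x‖ ^ 2

theorem isSemiconcave_half_norm_sub_sq {W : Type*} [NormedAddCommGroup W] [InnerProductSpace ℝ W]
    {A : V →L[ℝ] W} (hA : ∀ x, ‖A x‖ ^ 2 ≤ γ * ‖x‖ ^ 2) (d : W) :
    IsSemiconcave γ fun z => 1 / 2 * ‖A z - d‖ ^ 2 := by
  refine fun x => ⟨(innerSL ℝ (A x - d)).comp A, fun z => ?_⟩
  have hexpand : ‖A z - d‖ ^ 2 =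
      ‖A x - d‖ ^ 2 + 2 * ⟪A x - d, A (z - x)⟫_ℝ + ‖A (z - x)‖ ^ 2 := by
    rw [← norm_add_sq_real, map_sub, add_comm, sub_add_sub_cancel]
  beta_reduce
  rw [hexpand, ContinuousLinearMap.comp_apply, innerSL_apply_apply]
  linarith [hA (z - x)]

theorem IsSemiconcave.le_SgammaE_SgammaE_add [CompleteSpace V] {q : V → ℝ}
    (hq : IsSemiconcave γ q) (hγ : γ ≠ 0) {f : V → EReal} {φ : V →L[ℝ] ℝ} {b : ℝ}
    (hle : ∀ z, ((φ z + b : ℝ) : EReal) ≤ f z + q z) (x : V) :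
    ((φ x + b : ℝ) : EReal) ≤ SgammaE γ (SgammaE γ f) x + q x := by
  obtain ⟨ℓ, hℓ⟩ := hq x
  have htouch (z : V) : φ x + b - q x + (φ - ℓ) (z - x) - γ / 2 * ‖z - x‖ ^ 2 ≤
      φ z + b - q z := by
    rw [sub_apply, map_sub φ]
    linarith [hℓ z]
  have hbelow : ((φ x + b - q x : ℝ) : EReal) ≤ SgammaE γ (SgammaE γ f) x :=
    le_SgammaE_SgammaE_of_forall_le hγ fun z => (EReal.coe_le_coe_iff.2 (htouch z)).trans <| by
      rw [EReal.coe_sub]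
      exact EReal.sub_le_of_le_add (hle z)
  calc ((φ x + b : ℝ) : EReal) = ((φ x + b - q x : ℝ) : EReal) + q x := by
        rw [← EReal.coe_add, sub_add_cancel]
    _ ≤ SgammaE γ (SgammaE γ f) x + q x := add_le_add hbelow le_rfl

theorem statement16_general [CompleteSpace V] (hγ : γ ≠ 0) (f : V → EReal) {q : V → ℝ}
    (hq : IsSemiconcave γ q) (x : V) :
    lscConvexEnvelope (fun z => f z + q z) x ≤ SgammaE γ (SgammaE γ f) x + q x ∧
      SgammaE γ (SgammaE γ f) x + q x ≤ f x + q x := by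
  refine ⟨iSup_le ?_, add_le_add (SgammaE_SgammaE_le γ f x) le_rfl⟩
  rintro ⟨h, hlsc, hconv, hle⟩
  refine EReal.ge_of_forall_gt_iff_ge.1 fun c hc => ?_
  obtain ⟨φ, b, hφh, hcφ⟩ := hconv.exists_affine_le_of_lt hlsc hc
  exact (EReal.coe_le_coe_iff.2 hcφ).trans
    (hq.le_SgammaE_SgammaE_add hγ (fun z => (hφh z).trans (hle z)) x)

end Semiconcave

/-- case `A*A ≤ γI`. If `⟨A*Ax,x⟩ ≤ γ‖x‖²` for all `x`, then
`CE(𝒥) ≤ 𝒥_γ ≤ 𝒥` pointwise, where `𝒥(x) = f(x) + ½‖Ax-d‖²` and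
`𝒥_γ(x) = S_γ²(f)(x) + ½‖Ax-d‖²`. -/
theorem statement16 {V W : Type*}
    [NormedAddCommGroup V] [InnerProductSpace ℝ V] [CompleteSpace V]
    [TopologicalSpace.SeparableSpace V]
    [NormedAddCommGroup W] [InnerProductSpace ℝ W] [CompleteSpace W]
    [TopologicalSpace.SeparableSpace W]
    (f : V → ℝ≥0∞) (A : V →L[ℝ] W) (d : W) (γ : ℝ) (hγ : 0 < γ)
    (hA : ∀ x : V, ⟪(ContinuousLinearMap.adjoint A) (A x), x⟫_ℝ ≤ γ * ‖x‖ ^ 2) :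
    ∀ x : V,
      lscConvexEnvelope (fun z => (f z : EReal) + ((1 / 2 * ‖A z - d‖ ^ 2 : ℝ) : EReal)) x ≤
        Sgamma2 γ f x + ((1 / 2 * ‖A x - d‖ ^ 2 : ℝ) : EReal) ∧
      Sgamma2 γ f x + ((1 / 2 * ‖A x - d‖ ^ 2 : ℝ) : EReal) ≤
        (f x : EReal) + ((1 / 2 * ‖A x - d‖ ^ 2 : ℝ) : EReal) := by
  have hA' (x : V) : ‖A x‖ ^ 2 ≤ γ * ‖x‖ ^ 2 := by
    simpa [ContinuousLinearMap.adjoint_inner_left] using hA x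
  exact statement16_general hγ.ne' (fun z => (f z : EReal)) (isSemiconcave_half_norm_sub_sq hA' d)
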